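/- For every η ∈ ℝ^n one has ω_{σ,ρ}(Θ,η) ≥ ω^{(d)}_{σ,ρ}(Θ) and ω̂_{σ,ρ}(Θ,η) ≥ ω̂^{(d)}_{σ,ρ}(Θ). -/

import Mathlib

open Filter

noncomputable section

/-- The weighted norm `|x|_w = max_j |x_j|^(1/w_j)`. -/
def wnorm {k : ℕ} (w : Fin k → ℝ) (x : Fin k → ℝ) : ℝ := ⨆ j, |x j| ^ ((1 : ℝ) / w j)

/-- The lattice `Λ(Θ) = {(x, y − Θx) : x ∈ ℤ^m, y ∈ ℤ^n} ⊂ ℝ^(m+n)`. -/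
def latt (m n : ℕ) (Θ : Matrix (Fin n) (Fin m) ℝ) : Set (Fin (m + n) → ℝ) :=
  {v | ∃ (x : Fin m → ℤ) (y : Fin n → ℤ),
    v = Fin.append (fun j => (x j : ℝ))
      (fun i => (y i : ℝ) - Θ.mulVec (fun j => (x j : ℝ)) i)}

/-- The dual lattice `Λ*(Θ) = {(x + ᵀΘy, y) : x ∈ ℤ^m, y ∈ ℤ^n} ⊂ ℝ^(m+n)`. -/
def lattDual (m n : ℕ) (Θ : Matrix (Fin n) (Fin m) ℝ) : Set (Fin (m + n) → ℝ) :=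
  {v | ∃ (x : Fin m → ℤ) (y : Fin n → ℤ),
    v = Fin.append (fun j => (x j : ℝ) + Θ.transpose.mulVec (fun i => (y i : ℝ)) j)
      (fun i => (y i : ℝ))}

/-- `e₁ = (1−dσ₁, …, 1−dσ_m, 1, …, 1)` with `n` trailing ones, `d = m + n`. -/
def eOne (m n : ℕ) (σ : Fin m → ℝ) : Fin (m + n) → ℝ :=
  Fin.append (fun j => 1 - ((m + n : ℕ) : ℝ) * σ j) (fun _ => 1)

/-- `e₂ = (1, …, 1, 1−dρ_n, …, 1−dρ₁)` with `m` leading ones, `d = m + n`. -/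
def eTwo (m n : ℕ) (ρ : Fin n → ℝ) : Fin (m + n) → ℝ :=
  Fin.append (fun _ => (1 : ℝ)) (fun i => 1 - ((m + n : ℕ) : ℝ) * ρ i.rev)

/-- `μ(γ) = −e₁ + γ e₂`. -/
def muGamma (m n : ℕ) (σ : Fin m → ℝ) (ρ : Fin n → ℝ) (γ : ℝ) : Fin (m + n) → ℝ :=
  -eOne m n σ + γ • eTwo m n ρ

/-- `μ*(δ) = δ e₁ − e₂`. -/
def muStar (m n : ℕ) (σ : Fin m → ℝ) (ρ : Fin n → ℝ) (δ : ℝ) : Fin (m + n) → ℝ :=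
  δ • eOne m n σ - eTwo m n ρ

/-- The `k`-th successive minimum `λ_k(B_τ, Λ)` of the box
`B_τ = {z : |z_i| ≤ exp (τ i)}` with respect to the lattice `Λ`. -/
def succMin (d : ℕ) (Λ : Set (Fin d → ℝ)) (τ : Fin d → ℝ) (k : ℕ) : ℝ :=
  sInf {lam : ℝ | 0 < lam ∧ ∃ v : Fin k → (Fin d → ℝ),
    (∀ l, v l ∈ Λ) ∧ LinearIndependent ℝ v ∧ ∀ l i, |v l i| ≤ lam * Real.exp (τ i)}

/-- `L_k(Λ, τ) = log λ_k(B_τ, Λ)`. -/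
def Lk (d : ℕ) (Λ : Set (Fin d → ℝ)) (τ : Fin d → ℝ) (k : ℕ) : ℝ :=
  Real.log (succMin d Λ τ k)

/-- `S_k(Λ, τ) = L_1(Λ, τ) + ⋯ + L_k(Λ, τ)`. -/
def Sk (d : ℕ) (Λ : Set (Fin d → ℝ)) (τ : Fin d → ℝ) (k : ℕ) : ℝ :=
  ∑ j ∈ Finset.Icc 1 k, Lk d Λ τ j

/-- Schmidt–Summerer lower exponent of the first type:
`ψ̲_k(Λ, μ) = liminf_{s→+∞} L_k(Λ, sμ)/s`. -/
def psiLow (d : ℕ) (Λ : Set (Fin d → ℝ)) (μ : Fin d → ℝ) (k : ℕ) : ℝ :=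
  liminf (fun s : ℝ => Lk d Λ (s • μ) k / s) atTop

/-- Schmidt–Summerer upper exponent of the first type:
`ψ̄_k(Λ, μ) = limsup_{s→+∞} L_k(Λ, sμ)/s`. -/
def psiUp (d : ℕ) (Λ : Set (Fin d → ℝ)) (μ : Fin d → ℝ) (k : ℕ) : ℝ :=
  limsup (fun s : ℝ => Lk d Λ (s • μ) k / s) atTop

/-- Schmidt–Summerer lower exponent of the second type:
`Ψ̲_k(Λ, μ) = liminf_{s→+∞} S_k(Λ, sμ)/s`. -/
def PsiLow (d : ℕ) (Λ : Set (Fin d → ℝ)) (μ : Fin d → ℝ) (k : ℕ) : ℝ :=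
  liminf (fun s : ℝ => Sk d Λ (s • μ) k / s) atTop

/-- Schmidt–Summerer upper exponent of the second type:
`Ψ̄_k(Λ, μ) = limsup_{s→+∞} S_k(Λ, sμ)/s`. -/
def PsiUp (d : ℕ) (Λ : Set (Fin d → ℝ)) (μ : Fin d → ℝ) (k : ℕ) : ℝ :=
  limsup (fun s : ℝ => Sk d Λ (s • μ) k / s) atTop

/-- The system `|x|_σ ≤ t`, `|Θx − y|_ρ ≤ t^(−γ)` admits `k` linearly independent integer
solutions. -/
def solvK {m n : ℕ} (Θ : Matrix (Fin n) (Fin m) ℝ) (σ : Fin m → ℝ) (ρ : Fin n → ℝ)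
    (k : ℕ) (γ t : ℝ) : Prop :=
  ∃ v : Fin k → (Fin m → ℤ) × (Fin n → ℤ), LinearIndependent ℤ v ∧
    ∀ l, wnorm σ (fun j => ((v l).1 j : ℝ)) ≤ t ∧
      wnorm ρ (fun i => Θ.mulVec (fun j => ((v l).1 j : ℝ)) i - ((v l).2 i : ℝ)) ≤ t ^ (-γ)

/-- The `k`-th weighted Diophantine exponent `ω^(k)_{σ,ρ}(Θ)`. -/
def omegaK {m n : ℕ} (Θ : Matrix (Fin n) (Fin m) ℝ) (σ : Fin m → ℝ) (ρ : Fin n → ℝ)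
    (k : ℕ) : EReal :=
  sSup (Real.toEReal '' {γ : ℝ | ∀ T : ℝ, ∃ t > T, solvK Θ σ ρ k γ t})

/-- The `k`-th weighted uniform Diophantine exponent `ω̂^(k)_{σ,ρ}(Θ)`. -/
def omegaHatK {m n : ℕ} (Θ : Matrix (Fin n) (Fin m) ℝ) (σ : Fin m → ℝ) (ρ : Fin n → ℝ)
    (k : ℕ) : EReal :=
  sSup (Real.toEReal '' {γ : ℝ | ∃ T : ℝ, ∀ t > T, solvK Θ σ ρ k γ t})

/-- The inhomogeneous weighted Diophantine exponent `ω_{σ,ρ}(Θ, η)`. -/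
def omegaInhom {m n : ℕ} (Θ : Matrix (Fin n) (Fin m) ℝ) (σ : Fin m → ℝ) (ρ : Fin n → ℝ)
    (η : Fin n → ℝ) : EReal :=
  sSup (Real.toEReal '' {γ : ℝ | ∀ T : ℝ, ∃ t > T,
    ∃ (x : Fin m → ℤ) (y : Fin n → ℤ), (x, y) ≠ 0 ∧
      wnorm σ (fun j => (x j : ℝ)) ≤ t ∧
      wnorm ρ (fun i => Θ.mulVec (fun j => (x j : ℝ)) i - (y i : ℝ) - η i) ≤ t ^ (-γ)})

/-- The inhomogeneous uniform weighted Diophantine exponent `ω̂_{σ,ρ}(Θ, η)`. -/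
def omegaHatInhom {m n : ℕ} (Θ : Matrix (Fin n) (Fin m) ℝ) (σ : Fin m → ℝ) (ρ : Fin n → ℝ)
    (η : Fin n → ℝ) : EReal :=
  sSup (Real.toEReal '' {γ : ℝ | ∃ T : ℝ, ∀ t > T,
    ∃ (x : Fin m → ℤ) (y : Fin n → ℤ), (x, y) ≠ 0 ∧
      wnorm σ (fun j => (x j : ℝ)) ≤ t ∧
      wnorm ρ (fun i => Θ.mulVec (fun j => (x j : ℝ)) i - (y i : ℝ) - η i) ≤ t ^ (-γ)})

/-!
The `d` independent solutions of the homogeneous system form a basis of `ℝ^d`. Expand the target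
point `(0, -η)` in this basis and round each coordinate to a nonzero integer at distance at most
`1`: the resulting integer combination is nonzero and differs from the target by at most `d` times
the bound on the basis vectors, in each coordinate of `x` and of `Θx - y`. Choosing `C` with
`d ≤ C ^ w` for every weight `w`, this multiplies both weighted norms by at most `C`, and passing
from `γ` to any `γ' < γ` absorbs `C` once `t` is large.
-/

section Rounding

lemma exists_int_ne_zero_abs_sub_le_one {K : Type*} [Ring K] [LinearOrder K]
    [IsStrictOrderedRing K] [FloorRing K] (r : K) : ∃ k : ℤ, k ≠ 0 ∧ |(k : K) - r| ≤ 1 := by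
  have hfloor := Int.floor_le r
  have hlt := Int.lt_floor_add_one r
  by_cases h : ⌊r⌋ = 0
  · rw [h, Int.cast_zero] at hfloor hlt
    rw [zero_add] at hlt
    exact ⟨1, one_ne_zero, by
      rw [Int.cast_one, abs_of_nonneg (sub_nonneg.2 hlt.le)]
      exact sub_le_self _ hfloor⟩
  · refine ⟨⌊r⌋, h, ?_⟩
    rw [abs_sub_comm, abs_of_nonneg (sub_nonneg.2 hfloor), sub_le_iff_le_add']
    exact hlt.le

lemma exists_int_ne_zero_abs_apply_sum_smul_sub_le {ι E : Type*} [Fintype ι] [Nonempty ι]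
    [AddCommGroup E] [Module ℝ E] (b : Module.Basis ι ℝ E) (z : E) :
    ∃ k : ι → ℤ, k ≠ 0 ∧ ∀ (f : E →ₗ[ℝ] ℝ) (B : ℝ), (∀ i, |f (b i)| ≤ B) →
      |f (∑ i, k i • b i - z)| ≤ Fintype.card ι * B := by
  choose k hk₀ hk using fun i => exists_int_ne_zero_abs_sub_le_one (b.repr z i)
  refine ⟨k, fun h => hk₀ (Classical.arbitrary ι) (congrFun h _), fun f B hB => ?_⟩
  have hexpand : ∑ i, k i • b i - z = ∑ i, ((k i : ℝ) - b.repr z i) • b i := by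
    simp only [sub_smul, Finset.sum_sub_distrib, b.sum_repr, Int.cast_smul_eq_zsmul]
  calc |f (∑ i, k i • b i - z)|
      = |∑ i, ((k i : ℝ) - b.repr z i) * f (b i)| := by
        simp only [hexpand, map_sum, map_smul, smul_eq_mul]
    _ ≤ ∑ i, |(k i : ℝ) - b.repr z i| * |f (b i)| := by
        simpa only [abs_mul] using
          Finset.abs_sum_le_sum_abs (fun i => ((k i : ℝ) - b.repr z i) * f (b i)) Finset.univ
    _ ≤ ∑ _i : ι, 1 * B := by
        gcongr with i
        exacts [hk i, hB i]
    _ = Fintype.card ι * B := by simp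

end Rounding

section IntegerPoints

variable {α β ι : Type*}

/-- The inclusion of the integer points `(x, y)` into the corresponding real vector space. -/
def intCastProd (α β : Type*) : (α → ℤ) × (β → ℤ) →+ (α → ℝ) × (β → ℝ) :=
  ((Int.castAddHom ℝ).compLeft α).prodMap ((Int.castAddHom ℝ).compLeft β)

lemma intCastProd_apply (p : (α → ℤ) × (β → ℤ)) :
    intCastProd α β p = (fun j => (p.1 j : ℝ), fun i => (p.2 i : ℝ)) :=
  rfl

lemma linearIndependent_intCastProd [Finite α] [Finite β] {v : ι → (α → ℤ) × (β → ℤ)}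
    (hv : LinearIndependent ℤ v) : LinearIndependent ℝ (intCastProd α β ∘ v) := by
  have hint : LinearIndependent ℤ ((LinearEquiv.sumArrowLequivProdArrow α β ℤ ℤ).symm ∘ v) :=
    hv.map' _ (LinearEquiv.ker _)
  have hreal := linearIndependent_algebraMap_comp_iff (S := ℝ).2 hint
  exact hreal.map' (LinearEquiv.sumArrowLequivProdArrow α β ℝ ℝ).toLinearMap (LinearEquiv.ker _)

/-- The linear map `(x, y) ↦ Θx - y`, whose size measures the quality of an approximation. -/
def approxError [Fintype α] (Θ : Matrix β α ℝ) : (α → ℝ) × (β → ℝ) →ₗ[ℝ] β → ℝ :=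
  Θ.mulVecLin ∘ₗ LinearMap.fst ℝ _ _ - LinearMap.snd ℝ _ _

lemma exists_ne_zero_abs_inhomogeneous_le [Fintype α] [Fintype β] [Fintype ι] [Nonempty ι]
    {v : ι → (α → ℤ) × (β → ℤ)} (hv : LinearIndependent ℤ v)
    (hcard : Fintype.card ι = Fintype.card α + Fintype.card β)
    (Θ : Matrix β α ℝ) (η : β → ℝ) :
    ∃ p : (α → ℤ) × (β → ℤ), p ≠ 0 ∧
      (∀ j B, (∀ l, |((v l).1 j : ℝ)| ≤ B) → |(p.1 j : ℝ)| ≤ Fintype.card ι * B) ∧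
      ∀ i B, (∀ l, |Θ.mulVec (fun j => ((v l).1 j : ℝ)) i - ((v l).2 i : ℝ)| ≤ B) →
        |Θ.mulVec (fun j => (p.1 j : ℝ)) i - (p.2 i : ℝ) - η i| ≤ Fintype.card ι * B := by
  let b : Module.Basis ι ℝ ((α → ℝ) × (β → ℝ)) :=
    basisOfLinearIndependentOfCardEqFinrank (linearIndependent_intCastProd hv) (by simp [hcard])
  have hb : ∀ l, b l = intCastProd α β (v l) := fun l => by simp [b]
  obtain ⟨k, hk, hbound⟩ := exists_int_ne_zero_abs_apply_sum_smul_sub_le b (0, -η)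
  have hsum : ∑ l, k l • b l = intCastProd α β (∑ l, k l • v l) := by
    simp only [hb, map_sum, map_zsmul]
  rw [hsum] at hbound
  refine ⟨∑ l, k l • v l, fun h => hk (funext (Fintype.linearIndependent_iff.1 hv k h)),
    fun j B hB => ?_, fun i B hB => ?_⟩
  · have hcoord := hbound (LinearMap.proj j ∘ₗ LinearMap.fst ℝ _ _) B fun l => by
      rw [hb]; exact hB l
    simpa only [intCastProd_apply, LinearMap.comp_apply, LinearMap.fst_apply, LinearMap.proj_apply,
      Prod.fst_sub, sub_zero] using hcoord
  · have herror : ∀ p, approxError Θ (intCastProd α β p - (0, -η)) i =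
        Θ.mulVec (fun j => (p.1 j : ℝ)) i - (p.2 i : ℝ) - η i := fun p => by
      simp [approxError, intCastProd_apply, sub_sub]
    rw [← herror]
    exact hbound (LinearMap.proj i ∘ₗ approxError Θ) B (fun l => by rw [hb]; exact hB l)

end IntegerPoints

section WeightedNorm

variable {k : ℕ} {w : Fin k → ℝ}

lemma wnorm_le_iff (hw : ∀ j, 0 < w j) {x : Fin k → ℝ} {t : ℝ} (ht : 0 ≤ t) :
    wnorm w x ≤ t ↔ ∀ j, |x j| ≤ t ^ w j := by
  have hcoord : ∀ j, |x j| ^ (1 / w j) ≤ t ↔ |x j| ≤ t ^ w j := fun j => by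
    rw [one_div, Real.rpow_inv_le_iff_of_pos (abs_nonneg _) ht (hw j)]
  simp only [← hcoord]
  exact ⟨fun h j => (le_ciSup (Set.finite_range _).bddAbove j).trans h, fun h => Real.iSup_le h ht⟩

lemma wnorm_le_mul_of_abs_le {ι : Type*} (hw : ∀ j, 0 < w j) {u : ι → Fin k → ℝ}
    {x : Fin k → ℝ} {C D t : ℝ} (hC : 0 ≤ C) (ht : 0 ≤ t) (hCD : ∀ j, D ≤ C ^ w j)
    (hu : ∀ l, wnorm w (u l) ≤ t) (hx : ∀ j B, (∀ l, |u l j| ≤ B) → |x j| ≤ D * B) :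
    wnorm w x ≤ C * t := by
  refine (wnorm_le_iff hw (mul_nonneg hC ht)).2 fun j => ?_
  calc |x j| ≤ D * t ^ w j := hx j _ fun l => (wnorm_le_iff hw ht).1 (hu l) j
    _ ≤ C ^ w j * t ^ w j := by gcongr; exact hCD j
    _ = (C * t) ^ w j := (Real.mul_rpow hC ht).symm

end WeightedNorm

section Asymptotics

lemma eventually_forall_le_rpow {ι : Type*} [Finite ι] {w : ι → ℝ} (hw : ∀ j, 0 < w j) (D : ℝ) :
    ∀ᶠ C : ℝ in atTop, ∀ j, D ≤ C ^ w j :=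
  eventually_all.2 fun j => (tendsto_rpow_atTop (hw j)).eventually_ge_atTop D

lemma eventually_mul_rpow_neg_le {C γ γ' : ℝ} (hC : 0 < C) (hγ : γ' < γ) :
    ∀ᶠ t : ℝ in atTop, C * t ^ (-γ) ≤ (C * t) ^ (-γ') := by
  filter_upwards [eventually_gt_atTop 0,
    (tendsto_rpow_atTop (sub_pos.2 hγ)).eventually_ge_atTop (C ^ (1 + γ'))] with t ht hCt
  calc C * t ^ (-γ) = C ^ (1 + γ') * (C ^ (-γ') * t ^ (-γ)) := by
        rw [← mul_assoc, ← Real.rpow_add hC, add_neg_cancel_right, Real.rpow_one]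
    _ ≤ t ^ (γ - γ') * (C ^ (-γ') * t ^ (-γ)) := by gcongr
    _ = C ^ (-γ') * t ^ (-γ') := by
        rw [mul_left_comm, ← Real.rpow_add ht, show γ - γ' + -γ = -γ' by ring]
    _ = (C * t) ^ (-γ') := (Real.mul_rpow hC.le ht.le).symm

end Asymptotics

section Exponents

lemma sSup_image_toEReal_le_of_forall_lt {A B : Set ℝ} (h : ∀ γ ∈ A, ∀ γ' < γ, γ' ∈ B) :
    sSup (Real.toEReal '' A) ≤ sSup (Real.toEReal '' B) := by
  refine sSup_le (Set.forall_mem_image.2 fun γ hγ => ?_)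
  refine EReal.ge_of_forall_gt_iff_ge.1 fun γ' hlt => ?_
  exact le_sSup (Set.mem_image_of_mem _ (h γ hγ γ' (EReal.coe_lt_coe_iff.1 hlt)))

variable {P Q : ℝ → ℝ → Prop}

lemma sSup_frequently_le_of_rescale
    (h : ∀ γ γ', γ' < γ → ∃ C > 0, ∀ᶠ t in atTop, P γ t → Q γ' (C * t)) :
    sSup (Real.toEReal '' {γ | ∀ T, ∃ t > T, P γ t}) ≤
      sSup (Real.toEReal '' {γ | ∀ T, ∃ t > T, Q γ t}) := by
  refine sSup_image_toEReal_le_of_forall_lt fun γ hγ γ' hlt => ?_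
  obtain ⟨C, hC, hPQ⟩ := h γ γ' hlt
  have hQ : ∃ᶠ t in atTop, Q γ' (C * t) := (frequently_atTop'.2 hγ).mp hPQ
  exact frequently_atTop'.1 ((tendsto_id.const_mul_atTop hC).frequently hQ)

lemma sSup_eventually_le_of_rescale
    (h : ∀ γ γ', γ' < γ → ∃ C > 0, ∀ᶠ t in atTop, P γ t → Q γ' (C * t)) :
    sSup (Real.toEReal '' {γ | ∃ T, ∀ t > T, P γ t}) ≤
      sSup (Real.toEReal '' {γ | ∃ T, ∀ t > T, Q γ t}) := by
  refine sSup_image_toEReal_le_of_forall_lt fun γ ⟨T, hT⟩ γ' hlt => ?_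
  obtain ⟨C, hC, hPQ⟩ := h γ γ' hlt
  have hQ : ∀ᶠ t in atTop, Q γ' (C * t) := by
    filter_upwards [hPQ, eventually_gt_atTop T] with t htPQ ht using htPQ (hT t ht)
  have hQ' : ∀ᶠ t in atTop, Q γ' t := by
    simpa only [id, mul_div_cancel₀ _ hC.ne'] using (tendsto_id.atTop_div_const hC).eventually hQ
  obtain ⟨T', hT'⟩ := eventually_atTop.1 hQ'
  exact ⟨T', fun t ht => hT' t ht.le⟩

end Exponents

section Transference

variable {m n : ℕ} {σ : Fin m → ℝ} {ρ : Fin n → ℝ}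

/-- The inhomogeneous system `|x|_σ ≤ X`, `|Θx - y - η|_ρ ≤ Y` has a nonzero integer solution. The
two bounds are independent parameters, so that a common constant can first be lost in both. -/
def HasInhomSolution (Θ : Matrix (Fin n) (Fin m) ℝ) (σ : Fin m → ℝ) (ρ η : Fin n → ℝ)
    (X Y : ℝ) : Prop :=
  ∃ (x : Fin m → ℤ) (y : Fin n → ℤ), (x, y) ≠ 0 ∧ wnorm σ (fun j => (x j : ℝ)) ≤ X ∧
    wnorm ρ (fun i => Θ.mulVec (fun j => (x j : ℝ)) i - (y i : ℝ) - η i) ≤ Y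

variable [NeZero (m + n)]

lemma exists_const_hasInhomSolution_of_solvK (Θ : Matrix (Fin n) (Fin m) ℝ)
    (hσ : ∀ j, 0 < σ j) (hρ : ∀ i, 0 < ρ i) (η : Fin n → ℝ) :
    ∃ C > 0, ∀ γ t, 0 ≤ t → solvK Θ σ ρ (m + n) γ t →
      HasInhomSolution Θ σ ρ η (C * t) (C * t ^ (-γ)) := by
  obtain ⟨C, hC, hCσ, hCρ⟩ := ((eventually_gt_atTop 0).and
    ((eventually_forall_le_rpow hσ (Fintype.card (Fin (m + n)))).and
      (eventually_forall_le_rpow hρ (Fintype.card (Fin (m + n)))))).exists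
  refine ⟨C, hC, fun γ t ht ⟨v, hv, hvt⟩ => ?_⟩
  obtain ⟨p, hp, hx, hy⟩ := exists_ne_zero_abs_inhomogeneous_le hv (by simp) Θ η
  exact ⟨p.1, p.2, hp,
    wnorm_le_mul_of_abs_le hσ hC.le ht hCσ (fun l => (hvt l).1) hx,
    wnorm_le_mul_of_abs_le hρ hC.le (Real.rpow_nonneg ht _) hCρ (fun l => (hvt l).2) hy⟩

lemma exists_const_eventually_hasInhomSolution_of_solvK (Θ : Matrix (Fin n) (Fin m) ℝ)
    (hσ : ∀ j, 0 < σ j) (hρ : ∀ i, 0 < ρ i) (η : Fin n → ℝ) (γ γ' : ℝ) (hγ : γ' < γ) :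
    ∃ C > 0, ∀ᶠ t in atTop, solvK Θ σ ρ (m + n) γ t →
      HasInhomSolution Θ σ ρ η (C * t) ((C * t) ^ (-γ')) := by
  obtain ⟨C, hC, hsol⟩ := exists_const_hasInhomSolution_of_solvK Θ hσ hρ η
  refine ⟨C, hC, ?_⟩
  filter_upwards [eventually_ge_atTop 0, eventually_mul_rpow_neg_le hC hγ] with t ht hCt hs
  obtain ⟨x, y, hxy, hx, hy⟩ := hsol γ t ht hs
  exact ⟨x, y, hxy, hx, hy.trans hCt⟩

end Transference

theorem stmt15_general {m n : ℕ} [NeZero (m + n)] (Θ : Matrix (Fin n) (Fin m) ℝ)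
    (σ : Fin m → ℝ) (ρ : Fin n → ℝ) (hσ : ∀ j, 0 < σ j) (hρ : ∀ i, 0 < ρ i)
    (η : Fin n → ℝ) :
    omegaK Θ σ ρ (m + n) ≤ omegaInhom Θ σ ρ η ∧
    omegaHatK Θ σ ρ (m + n) ≤ omegaHatInhom Θ σ ρ η := by
  have htransfer := exists_const_eventually_hasInhomSolution_of_solvK Θ hσ hρ η
  exact ⟨sSup_frequently_le_of_rescale htransfer, sSup_eventually_le_of_rescale htransfer⟩

theorem stmt15 {m n : ℕ} (Θ : Matrix (Fin (n + 1)) (Fin (m + 1)) ℝ)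
    (σ : Fin (m + 1) → ℝ) (ρ : Fin (n + 1) → ℝ)
    (hσa : Antitone σ) (hρa : Antitone ρ)
    (hσp : ∀ j, 0 < σ j) (hρp : ∀ i, 0 < ρ i)
    (hσs : ∑ j, σ j = 1) (hρs : ∑ i, ρ i = 1)
    (η : Fin (n + 1) → ℝ) :
    omegaK Θ σ ρ (m + 1 + (n + 1)) ≤ omegaInhom Θ σ ρ η ∧
    omegaHatK Θ σ ρ (m + 1 + (n + 1)) ≤ omegaHatInhom Θ σ ρ η :=
  stmt15_general Θ σ ρ hσp hρp η
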